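/- For all n ≥ 1, T > 0, C₁, C₂, M, Λ > 0 there exists C > 0 with the following property. Let g = (g^{αβ}) be a C¹ field of symmetric n×n matrices on an open neighborhood of [−T,T] × ℝⁿ with C₁·Id ≤ g ≤ C₂·Id and all first-order partial derivatives of the g^{αβ} bounded by M; let b⁰,…,bⁿ, c be measurable and bounded by M; let f be continuous and square integrable on [−T,T] × ℝⁿ; let φ : ℝⁿ → ℝ be Lipschitz with constant at most Λ, with −T < φ(x) < T for all x, and characteristic: Σ g^{αβ}(φ(x),x) ∂_αφ(x) ∂_βφ(x) = 1 for almost every x; let v be C² on a neighborhood of [−T,T] × ℝⁿ, vanishing for |x| ≥ R for some R, and satisfying ∂_t²v − Σ g^{αβ}∂_α∂_β v + b⁰∂_t v + Σ b^α∂_α v + c v = f. Then, with w(x) := v(φ(x),x) and ∇w its almost-everywhere gradient, for every s ∈ [−T,T]: E(s,v) ≤ C·(∫_{ℝⁿ} (w(x)² + |∇w(x)|²) dx + ∫∫_{[−T,T]×ℝⁿ} f(t,x)² dt dx). -/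

import Mathlib

open MeasureTheory

/-- Time partial derivative `∂_t u` of a function on `ℝ × ℝⁿ`. -/
noncomputable def Dt {n : ℕ} (u : ℝ × (Fin n → ℝ) → ℝ) (p : ℝ × (Fin n → ℝ)) : ℝ :=
  fderiv ℝ u p (1, 0)

/-- Spatial partial derivative `∂_α u` of a function on `ℝ × ℝⁿ`. -/
noncomputable def Dx {n : ℕ} (α : Fin n) (u : ℝ × (Fin n → ℝ) → ℝ)
    (p : ℝ × (Fin n → ℝ)) : ℝ :=
  fderiv ℝ u p (0, Pi.single α 1)

/-- The energy at time `t` of `v` for the time-dependent metric `g`. -/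
noncomputable def energy {n : ℕ} (g : Fin n → Fin n → ℝ × (Fin n → ℝ) → ℝ)
    (v : ℝ × (Fin n → ℝ) → ℝ) (t : ℝ) : ℝ :=
  ∫ x : Fin n → ℝ,
    ((Dt v (t, x)) ^ 2 + (∑ α, ∑ β, g α β (t, x) * Dx α v (t, x) * Dx β v (t, x))
      + (v (t, x)) ^ 2)


/-- Derivative of `x ↦ ∫_{ψ x}^σ X(t,x) dt`. -/
theorem hasFDerivAt_G {n : ℕ} {X : ℝ × (Fin n → ℝ) → ℝ} (hX : ContDiff ℝ 1 X)
    {L : NNReal} (hL : LipschitzWith L X) {ψ : (Fin n → ℝ) → ℝ} (σ : ℝ)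
    {x₀ : Fin n → ℝ} (hψ : DifferentiableAt ℝ ψ x₀) :
    HasFDerivAt (fun x => ∫ t in (ψ x)..σ, X (t, x))
      ((∫ t in (ψ x₀)..σ, (fderiv ℝ X (t, x₀)).comp (ContinuousLinearMap.inr ℝ ℝ (Fin n → ℝ)))
        - X (ψ x₀, x₀) • fderiv ℝ ψ x₀) x₀ := by
  have hXc : Continuous X := hX.continuous
  have hint : ∀ (x : Fin n → ℝ) a b, IntervalIntegrable (fun t => X (t, x)) volume a b :=
    fun x a b => (hXc.comp (by fun_prop : Continuous fun t : ℝ => (t, x))).intervalIntegrable _ _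
  have hfc : Continuous (fderiv ℝ X) := hX.continuous_fderiv (by simp)
  have h1 : HasFDerivAt (fun x => ∫ t in (ψ x₀)..σ, X (t, x))
      (∫ t in (ψ x₀)..σ, (fderiv ℝ X (t, x₀)).comp
        (ContinuousLinearMap.inr ℝ ℝ (Fin n → ℝ))) x₀ := by
    have := intervalIntegral.hasFDerivAt_integral_of_dominated_of_fderiv_le (𝕜 := ℝ)
      (μ := volume) (a := ψ x₀) (b := σ) (F := fun x t => X (t, x)) (s := Set.univ) (x₀ := x₀)
      (F' := fun x t => (fderiv ℝ X (t, x)).comp (ContinuousLinearMap.inr ℝ ℝ (Fin n → ℝ)))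
      (bound := fun _ => (L : ℝ)) Filter.univ_mem ?_ (hint _ _ _) ?_ ?_
      intervalIntegrable_const ?_
    · exact this
    · refine Filter.Eventually.of_forall fun x => ?_
      exact (hXc.comp (by fun_prop : Continuous fun t : ℝ => (t, x))).aestronglyMeasurable
    · apply Continuous.aestronglyMeasurable
      exact (hfc.comp (by fun_prop : Continuous fun t : ℝ => (t, x₀))).clm_comp continuous_const
    · refine Filter.Eventually.of_forall fun t _ x _ => ?_
      refine ContinuousLinearMap.opNorm_le_bound _ L.2 fun y => ?_
      have h2 := (fderiv ℝ X (t, x)).le_opNorm (0, y)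
      have h3 : ‖fderiv ℝ X (t, x)‖ ≤ L := norm_fderiv_le_of_lipschitz ℝ hL
      have h4 : ‖((0 : ℝ), y)‖ = ‖y‖ := by simp [Prod.norm_def]
      rw [h4] at h2
      simpa using h2.trans (mul_le_mul_of_nonneg_right h3 (norm_nonneg y))
    · refine Filter.Eventually.of_forall fun t _ x _ => ?_
      have h2 : HasFDerivAt X (fderiv ℝ X (t, x)) (t, x) :=
        (hX.differentiable (by simp) _).hasFDerivAt
      exact h2.comp x (hasFDerivAt_prodMk_right t x)
  have h2 : HasFDerivAt (fun x => ∫ t in (ψ x₀)..(ψ x), X (t, x₀))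
      (X (ψ x₀, x₀) • fderiv ℝ ψ x₀) x₀ := by
    have hc : Continuous fun t : ℝ => X (t, x₀) :=
      hXc.comp (by fun_prop : Continuous fun t : ℝ => (t, x₀))
    have h3 : HasDerivAt (fun u => ∫ t in (ψ x₀)..u, X (t, x₀)) (X (ψ x₀, x₀)) (ψ x₀) :=
      intervalIntegral.integral_hasDerivAt_right (hint _ _ _)
        (hc.stronglyMeasurableAtFilter _ _) hc.continuousAt
    exact h3.comp_hasFDerivAt x₀ hψ.hasFDerivAt
  have h3 : HasFDerivAt (fun x => ∫ t in (ψ x₀)..(ψ x), (X (t, x) - X (t, x₀)))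
      (0 : (Fin n → ℝ) →L[ℝ] ℝ) x₀ := by
    have hbd : ∀ x, ‖∫ t in (ψ x₀)..(ψ x), (X (t, x) - X (t, x₀))‖
        ≤ (L * ‖x - x₀‖) * |ψ x - ψ x₀| := by
      intro x
      refine intervalIntegral.norm_integral_le_of_norm_le_const fun t _ => ?_
      have := hL.dist_le_mul (t, x) (t, x₀)
      rw [Prod.dist_eq] at this
      simpa [dist_eq_norm] using this
    rw [hasFDerivAt_iff_isLittleO]
    simp only [zero_apply, sub_zero]
    have h0 : (∫ t in (ψ x₀)..(ψ x₀), (X (t, x₀) - X (t, x₀))) = 0 := by simp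
    rw [h0]
    simp only [sub_zero]
    rw [Asymptotics.isLittleO_iff]
    intro c hc
    have hcont : Filter.Tendsto (fun x => L * |ψ x - ψ x₀|) (nhds x₀) (nhds 0) := by
      have : ContinuousAt (fun x => L * |ψ x - ψ x₀|) x₀ := by
        have := hψ.continuousAt
        fun_prop
      simpa [ContinuousAt] using this
    filter_upwards [hcont.eventually (gt_mem_nhds hc)] with x hx
    calc _ ≤ (L * ‖x - x₀‖) * |ψ x - ψ x₀| := hbd x
      _ = (L * |ψ x - ψ x₀|) * ‖x - x₀‖ := by ring
      _ ≤ c * ‖x - x₀‖ := mul_le_mul_of_nonneg_right hx.le (norm_nonneg _)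
  have h4 := (h1.sub h2).sub h3
  rw [sub_zero] at h4
  refine h4.congr_of_eventuallyEq (Filter.Eventually.of_forall fun x => ?_)
  simp only [Pi.sub_apply]
  rw [intervalIntegral.integral_sub (hint _ _ _) (hint _ _ _)]
  have := intervalIntegral.integral_add_adjacent_intervals (hint x (ψ x₀) (ψ x)) (hint x (ψ x) σ)
  linarith

theorem lipschitz_G {n : ℕ} {X : ℝ × (Fin n → ℝ) → ℝ}
    {L : NNReal} (hL : LipschitzWith L X) {B : ℝ} (hB : ∀ p, |X p| ≤ B)
    {ψ : (Fin n → ℝ) → ℝ} {Λ : NNReal} (hψ : LipschitzWith Λ ψ) (σ D : ℝ)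
    (hD : ∀ x, |σ - ψ x| ≤ D) :
    ∃ K : NNReal, LipschitzWith K (fun x => ∫ t in (ψ x)..σ, X (t, x)) := by
  have hXc : Continuous X := hL.continuous
  have hint : ∀ (x : Fin n → ℝ) a b, IntervalIntegrable (fun t => X (t, x)) volume a b :=
    fun x a b => (hXc.comp (by fun_prop : Continuous fun t : ℝ => (t, x))).intervalIntegrable _ _
  have hB0 : 0 ≤ B := (abs_nonneg _).trans (hB 0)
  have hD0 : 0 ≤ D := (abs_nonneg _).trans (hD 0)
  refine ⟨L * D.toNNReal + B.toNNReal * Λ, LipschitzWith.of_dist_le_mul fun x y => ?_⟩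
  have e : (∫ t in (ψ x)..σ, X (t, x)) - ∫ t in (ψ y)..σ, X (t, y)
      = (∫ t in (ψ x)..σ, (X (t, x) - X (t, y))) + ∫ t in (ψ x)..(ψ y), X (t, y) := by
    rw [intervalIntegral.integral_sub (hint _ _ _) (hint _ _ _)]
    have := intervalIntegral.integral_add_adjacent_intervals (hint y (ψ x) (ψ y)) (hint y (ψ y) σ)
    linarith
  rw [dist_eq_norm, e]
  have h1 : ‖∫ t in (ψ x)..σ, (X (t, x) - X (t, y))‖ ≤ (L * ‖x - y‖) * |σ - ψ x| := by
    refine intervalIntegral.norm_integral_le_of_norm_le_const fun t _ => ?_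
    have := hL.dist_le_mul (t, x) (t, y)
    rw [Prod.dist_eq] at this
    simpa [dist_eq_norm] using this
  have h2 : ‖∫ t in (ψ x)..(ψ y), X (t, y)‖ ≤ B * |ψ y - ψ x| :=
    intervalIntegral.norm_integral_le_of_norm_le_const fun t _ => hB _
  have h3 : |ψ y - ψ x| ≤ Λ * ‖x - y‖ := by
    have := hψ.dist_le_mul y x
    rw [dist_eq_norm, dist_eq_norm, norm_sub_rev y x] at this
    exact this
  calc _ ≤ _ := norm_add_le _ _
    _ ≤ (L * ‖x - y‖) * D + B * (Λ * ‖x - y‖) := by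
      refine add_le_add (h1.trans ?_) (h2.trans ?_)
      · exact mul_le_mul_of_nonneg_left (hD x) (by positivity)
      · exact mul_le_mul_of_nonneg_left h3 hB0
    _ = _ := by
      rw [dist_eq_norm]; push_cast; rw [Real.coe_toNNReal _ hD0, Real.coe_toNNReal _ hB0]; ring

theorem integral_fderiv_zero {n : ℕ} {G : (Fin n → ℝ) → ℝ} {K : NNReal}
    (hG : LipschitzWith K G) (hc : HasCompactSupport G) (v : Fin n → ℝ) :
    ∫ x, fderiv ℝ G x v = 0 := by
  have h := LipschitzWith.integral_lineDeriv_mul_eq (μ := (volume : Measure (Fin n → ℝ)))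
    (LipschitzWith.const (1 : ℝ)) hG hc (-v)
  simp only [neg_neg, mul_one] at h
  have h1 : ∀ x : Fin n → ℝ, lineDeriv ℝ (fun _ : Fin n → ℝ => (1 : ℝ)) x (-v) = 0 := by
    intro x; simp [lineDeriv]
  simp only [h1, zero_mul, integral_zero] at h
  rw [h]
  refine integral_congr_ae ?_
  filter_upwards [hG.ae_differentiableAt] with x hx
  exact hx.lineDeriv_eq_fderiv.symm

theorem exists_radius {n : ℕ} {X : ℝ × (Fin n → ℝ) → ℝ} (h : HasCompactSupport X) :
    ∃ R : ℝ, ∀ t x, R < ‖x‖ → X (t, x) = 0 := by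
  obtain ⟨R, hR⟩ := h.isCompact.isBounded.exists_norm_le
  refine ⟨R, fun t x hx => ?_⟩
  by_contra h0
  have := hR (t, x) (subset_tsupport _ h0)
  have h2 : ‖x‖ ≤ ‖(t, x)‖ := norm_snd_le (t, x)
  linarith

theorem cs_of_vanish {n : ℕ} {G : (Fin n → ℝ) → ℝ} {R : ℝ} (h : ∀ x, R < ‖x‖ → G x = 0) :
    HasCompactSupport G := by
  refine HasCompactSupport.intro (isCompact_closedBall (0 : Fin n → ℝ) R) fun x hx => h x ?_
  simpa using hx

theorem cont_G {n : ℕ} {X : ℝ × (Fin n → ℝ) → ℝ} (hX : Continuous X)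
    {ψ : (Fin n → ℝ) → ℝ} (hψ : Continuous ψ) (σ : ℝ) :
    Continuous (fun x => ∫ t in (ψ x)..σ, X (t, x)) := by
  have h := intervalIntegral.continuous_parametric_intervalIntegral_of_continuous (μ := volume)
    (f := fun (x : Fin n → ℝ) t => X (t, x)) (a₀ := σ)
    (by exact hX.comp (by fun_prop : Continuous fun p : (Fin n → ℝ) × ℝ => (p.2, p.1))) hψ
  refine h.neg.congr fun x => ?_
  exact (intervalIntegral.integral_symm _ _).symm

theorem integrable_G {n : ℕ} {X : ℝ × (Fin n → ℝ) → ℝ} (hX : Continuous X)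
    (hc : HasCompactSupport X)
    {ψ : (Fin n → ℝ) → ℝ} (hψ : Continuous ψ) (σ : ℝ) :
    Integrable (fun x => ∫ t in (ψ x)..σ, X (t, x)) := by
  obtain ⟨R, hR⟩ := exists_radius hc
  refine (cont_G hX hψ σ).integrable_of_hasCompactSupport (cs_of_vanish (R := R) fun x hx => ?_)
  simp [hR _ x hx]

theorem integrable_graph {n : ℕ} {X : ℝ × (Fin n → ℝ) → ℝ} (hX : Continuous X)
    (hc : HasCompactSupport X)
    {ψ : (Fin n → ℝ) → ℝ} (hψ : Continuous ψ) :
    Integrable (fun x => X (ψ x, x)) := by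
  obtain ⟨R, hR⟩ := exists_radius hc
  refine Continuous.integrable_of_hasCompactSupport (by fun_prop)
    (cs_of_vanish (R := R) fun x hx => ?_)
  simp [hR _ x hx]

theorem integrable_graph_deriv {n : ℕ} {X : ℝ × (Fin n → ℝ) → ℝ} (hX : Continuous X)
    (hc : HasCompactSupport X)
    {ψ : (Fin n → ℝ) → ℝ} {Λ : NNReal} (hψ : LipschitzWith Λ ψ) (e : Fin n → ℝ) :
    Integrable (fun x => X (ψ x, x) * fderiv ℝ ψ x e) := by
  refine (integrable_graph hX hc hψ.continuous).mul_bdd (c := Λ * ‖e‖)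
    (measurable_fderiv_apply_const ℝ ψ e).aestronglyMeasurable
    (Filter.Eventually.of_forall fun x => ?_)
  refine ((fderiv ℝ ψ x).le_opNorm e).trans ?_
  exact mul_le_mul_of_nonneg_right (norm_fderiv_le_of_lipschitz ℝ hψ) (norm_nonneg e)

theorem continuous_Dt {n : ℕ} {X : ℝ × (Fin n → ℝ) → ℝ} (hX : ContDiff ℝ 1 X) :
    Continuous (Dt X) := by
  have := hX.continuous_fderiv (by simp)
  unfold Dt
  fun_prop

theorem continuous_Dx {n : ℕ} {X : ℝ × (Fin n → ℝ) → ℝ} (hX : ContDiff ℝ 1 X) (α : Fin n) :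
    Continuous (Dx α X) := by
  have := hX.continuous_fderiv (by simp)
  unfold Dx
  fun_prop

theorem cs_Dt {n : ℕ} {X : ℝ × (Fin n → ℝ) → ℝ} (hX : HasCompactSupport X) :
    HasCompactSupport (Dt X) := hX.fderiv_apply ℝ _

theorem cs_Dx {n : ℕ} {X : ℝ × (Fin n → ℝ) → ℝ} (hX : HasCompactSupport X) (α : Fin n) :
    HasCompactSupport (Dx α X) := hX.fderiv_apply ℝ _

/-- Spatial part of the divergence theorem. -/
theorem div_space {n : ℕ} {X : ℝ × (Fin n → ℝ) → ℝ} (hX : ContDiff ℝ 1 X)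
    (hc : HasCompactSupport X) {ψ : (Fin n → ℝ) → ℝ} {Λ : NNReal} (hψ : LipschitzWith Λ ψ)
    (σ D : ℝ) (hD : ∀ x, |σ - ψ x| ≤ D) (α : Fin n) :
    ∫ x, X (ψ x, x) * fderiv ℝ ψ x (Pi.single α 1) = ∫ x, ∫ t in (ψ x)..σ, Dx α X (t, x) := by
  obtain ⟨L, hL⟩ := ContDiff.lipschitzWith_of_hasCompactSupport hc hX (by simp)
  obtain ⟨B, hB⟩ := hc.exists_bound_of_continuous hX.continuous
  obtain ⟨K, hK⟩ := lipschitz_G hL hB hψ σ D hD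
  obtain ⟨R, hR⟩ := exists_radius hc
  have hG0 := integral_fderiv_zero hK (cs_of_vanish (R := R) fun x hx => by simp [hR _ x hx])
    (Pi.single α 1)
  have hae : (fun x => fderiv ℝ (fun x => ∫ t in (ψ x)..σ, X (t, x)) x (Pi.single α 1))
      =ᵐ[volume] fun x => (∫ t in (ψ x)..σ, Dx α X (t, x))
        - X (ψ x, x) * fderiv ℝ ψ x (Pi.single α 1) := by
    filter_upwards [hψ.ae_differentiableAt] with x hx
    rw [(hasFDerivAt_G hX hL σ hx).fderiv]
    have hfc : Continuous (fderiv ℝ X) := hX.continuous_fderiv (by simp)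
    have hi : IntervalIntegrable (fun t => (fderiv ℝ X (t, x)).comp
        (ContinuousLinearMap.inr ℝ ℝ (Fin n → ℝ))) volume (ψ x) σ := by
      apply Continuous.intervalIntegrable
      exact (hfc.comp (by fun_prop : Continuous fun t : ℝ => (t, x))).clm_comp continuous_const
    rw [sub_apply, ContinuousLinearMap.intervalIntegral_apply hi]
    simp [Dx]
  rw [integral_congr_ae hae, integral_sub
    (integrable_G (continuous_Dx hX α) (cs_Dx hc α) hψ.continuous σ)
    (integrable_graph_deriv hX.continuous hc hψ _)] at hG0
  linarith

theorem div_time {n : ℕ} {F : ℝ × (Fin n → ℝ) → ℝ} (hF : ContDiff ℝ 1 F) (a b : ℝ)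
    (x : Fin n → ℝ) :
    ∫ t in a..b, Dt F (t, x) = F (b, x) - F (a, x) := by
  refine intervalIntegral.integral_eq_sub_of_hasDerivAt (f := fun t => F (t, x)) (fun t _ => ?_) ?_
  · have h2 : HasFDerivAt F (fderiv ℝ F (t, x)) (t, x) :=
      (hF.differentiable (by simp) _).hasFDerivAt
    have := h2.comp_hasDerivAt t ((hasDerivAt_id t).prodMk (hasDerivAt_const t x))
    exact this
  · have := continuous_Dt hF
    exact Continuous.intervalIntegrable (by fun_prop) _ _

/-- Divergence theorem between the graph of `ψ` and `{t = σ}`. -/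
theorem div_full {n : ℕ} {F : ℝ × (Fin n → ℝ) → ℝ} (hF : ContDiff ℝ 1 F)
    (hFc : HasCompactSupport F) {X : Fin n → ℝ × (Fin n → ℝ) → ℝ}
    (hX : ∀ α, ContDiff ℝ 1 (X α))
    (hc : ∀ α, HasCompactSupport (X α)) {ψ : (Fin n → ℝ) → ℝ} {Λ : NNReal}
    (hψ : LipschitzWith Λ ψ)
    (σ D : ℝ) (hD : ∀ x, |σ - ψ x| ≤ D) :
    Integrable (fun x => F (σ, x) - F (ψ x, x)
      + ∑ α, X α (ψ x, x) * fderiv ℝ ψ x (Pi.single α 1)) ∧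
    Integrable (fun x => ∫ t in (ψ x)..σ, (Dt F (t, x) + ∑ α, Dx α (X α) (t, x))) ∧
    ∫ x, (F (σ, x) - F (ψ x, x)
      + ∑ α, X α (ψ x, x) * fderiv ℝ ψ x (Pi.single α 1))
    = ∫ x, ∫ t in (ψ x)..σ, (Dt F (t, x) + ∑ α, Dx α (X α) (t, x)) := by
  have i1 : Integrable (fun x => F (σ, x) - F (ψ x, x)) :=
    (integrable_graph hF.continuous hFc continuous_const).sub
      (integrable_graph hF.continuous hFc hψ.continuous)
  have i2 : ∀ α, Integrable (fun x => X α (ψ x, x) * fderiv ℝ ψ x (Pi.single α 1)) :=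
    fun α => integrable_graph_deriv (hX α).continuous (hc α) hψ _
  have i3 : ∀ α, Integrable (fun x => ∫ t in (ψ x)..σ, Dx α (X α) (t, x)) :=
    fun α => integrable_G (continuous_Dx (hX α) α) (cs_Dx (hc α) α) hψ.continuous σ
  have e : (fun x => ∫ t in (ψ x)..σ, (Dt F (t, x) + ∑ α, Dx α (X α) (t, x)))
      = fun x => (F (σ, x) - F (ψ x, x)) + ∑ α, ∫ t in (ψ x)..σ, Dx α (X α) (t, x) := by
    funext x
    have c1 := continuous_Dt hF
    have c2 := fun α => continuous_Dx (hX α) α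
    rw [intervalIntegral.integral_add, div_time hF, intervalIntegral.integral_finsetSum]
    · intro α _
      have := c2 α
      exact Continuous.intervalIntegrable (by fun_prop) _ _
    · exact Continuous.intervalIntegrable (by fun_prop) _ _
    · exact Continuous.intervalIntegrable (by fun_prop) _ _
  refine ⟨i1.add (integrable_finsetSum _ fun α _ => i2 α), ?_, ?_⟩
  · rw [e]
    exact i1.add (integrable_finsetSum _ fun α _ => i3 α)
  · rw [e, integral_add i1 (integrable_finsetSum _ fun α _ => i2 α),
      integral_add i1 (integrable_finsetSum _ fun α _ => i3 α),
      integral_finsetSum _ (fun α _ => i2 α), integral_finsetSum _ (fun α _ => i3 α)]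
    congr 1
    exact Finset.sum_congr rfl fun α _ => div_space (hX α) (hc α) hψ σ D hD α

theorem Dt_exp_mul {n : ℕ} {e : ℝ × (Fin n → ℝ) → ℝ} (he : ContDiff ℝ 1 e) (k : ℝ)
    (p : ℝ × (Fin n → ℝ)) :
    Dt (fun p => Real.exp (k * p.1) * e p) p = Real.exp (k * p.1) * (k * e p + Dt e p) := by
  have h1 : HasFDerivAt e (fderiv ℝ e p) p := (he.differentiable (by simp) p).hasFDerivAt
  have h2 : HasFDerivAt (fun p : ℝ × (Fin n → ℝ) => Real.exp (k * p.1)) _ p :=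
    ((hasFDerivAt_fst (𝕜 := ℝ) (p := p)).const_mul k).exp
  unfold Dt
  rw [show fderiv ℝ (fun p => Real.exp (k * p.1) * e p) p = _ from (h2.mul h1).fderiv]
  simp
  ring

theorem Dx_exp_mul {n : ℕ} {e : ℝ × (Fin n → ℝ) → ℝ} (he : ContDiff ℝ 1 e) (k : ℝ)
    (p : ℝ × (Fin n → ℝ)) (α : Fin n) :
    Dx α (fun p => -(Real.exp (k * p.1) * e p)) p = -(Real.exp (k * p.1) * Dx α e p) := by
  have h1 : HasFDerivAt e (fderiv ℝ e p) p := (he.differentiable (by simp) p).hasFDerivAt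
  have h2 : HasFDerivAt (fun p : ℝ × (Fin n → ℝ) => Real.exp (k * p.1)) _ p :=
    ((hasFDerivAt_fst (𝕜 := ℝ) (p := p)).const_mul k).exp
  unfold Dx
  rw [show fderiv ℝ (fun p => -(Real.exp (k * p.1) * e p)) p = _ from (h2.mul h1).neg.fderiv]
  simp

theorem half_estimate {n : ℕ} {e q : ℝ × (Fin n → ℝ) → ℝ} {Y : Fin n → ℝ × (Fin n → ℝ) → ℝ}
    (he : ContDiff ℝ 1 e) (hec : HasCompactSupport e)
    (hY : ∀ α, ContDiff ℝ 1 (Y α)) (hYc : ∀ α, HasCompactSupport (Y α))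
    {T K : ℝ} (hK : 0 ≤ K) {ε : ℝ} (hε : ε = 1 ∨ ε = -1)
    (hepos : ∀ t ∈ Set.Icc (-T) T, ∀ x, 0 ≤ e (t, x))
    (hD : ∀ t ∈ Set.Icc (-T) T, ∀ x,
      |Dt e (t, x) - ∑ α, Dx α (Y α) (t, x)| ≤ K * e (t, x) + q (t, x))
    (hqc : Continuous q) (hq0 : ∀ p, 0 ≤ q p)
    (hqi : IntegrableOn q (Set.Icc (-T) T ×ˢ (Set.univ : Set (Fin n → ℝ))))
    {ψ : (Fin n → ℝ) → ℝ} {Λ : NNReal} (hψ : LipschitzWith Λ ψ)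
    (hψT : ∀ x, ψ x ∈ Set.Icc (-T) T) {s : ℝ} (hs : s ∈ Set.Icc (-T) T)
    (hεs : ∀ x, 0 ≤ ε * (s - ψ x)) {h : (Fin n → ℝ) → ℝ} (hh : Integrable h)
    (hh0 : ∀ x, 0 ≤ h x)
    (hbd : ∀ᵐ x, ψ x ≠ s →
      e (ψ x, x) + ∑ α, Y α (ψ x, x) * fderiv ℝ ψ x (Pi.single α 1) ≤ h x) :
    ∫ x in {x | ψ x ≠ s}, e (s, x) ≤ Real.exp (2 * K * T) *
      ((∫ x, h x) + ∫ p in Set.Icc (-T) T ×ˢ (Set.univ : Set (Fin n → ℝ)), q p) := by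
  set k : ℝ := -(ε * K) with hk
  have hε2 : ε * ε = 1 := by rcases hε with rfl | rfl <;> norm_num
  have hεa : |ε| = 1 := by rcases hε with rfl | rfl <;> norm_num
  have hexp : ∀ t ∈ Set.Icc (-T) T,
      Real.exp (-(K * T)) ≤ Real.exp (k * t) ∧ Real.exp (k * t) ≤ Real.exp (K * T) := by
    intro t ht
    have : |k * t| ≤ K * T := by
      rw [hk, abs_mul, abs_neg, abs_mul, hεa, one_mul, abs_of_nonneg hK]
      exact mul_le_mul_of_nonneg_left (abs_le.mpr ht) hK
    exact ⟨Real.exp_le_exp.mpr (abs_le.mp this).1, Real.exp_le_exp.mpr (abs_le.mp this).2⟩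
  have hexpd : ContDiff ℝ 1 fun p : ℝ × (Fin n → ℝ) => Real.exp (k * p.1) := by fun_prop
  obtain ⟨hI, hJ, hIJ⟩ := div_full (F := fun p => Real.exp (k * p.1) * e p)
    (hexpd.mul he) hec.mul_left (X := fun α p => -(Real.exp (k * p.1) * Y α p))
    (fun α => (hexpd.mul (hY α)).neg) (fun α => ((hYc α).mul_left).neg) hψ s (2 * T)
    (fun x => by
      have h1 := hψT x
      rw [abs_le]; constructor <;> linarith [h1.1, h1.2, hs.1, hs.2])
  have hqi' := hqi
  rw [IntegrableOn, Measure.volume_eq_prod, ← Measure.prod_restrict, Measure.restrict_univ] at hqi'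
  have hQi : Integrable (fun x => ∫ t in Set.Icc (-T) T, q (t, x)) := hqi'.integral_prod_right
  have hQ : ∫ x, ∫ t in Set.Icc (-T) T, q (t, x)
      = ∫ p in Set.Icc (-T) T ×ˢ (Set.univ : Set (Fin n → ℝ)), q p := by
    rw [Measure.volume_eq_prod, ← Measure.prod_restrict, Measure.restrict_univ]
    exact (integral_prod_symm _ hqi').symm
  have hT : -T ≤ T := hs.1.trans hs.2
  -- upper bound for `J`
  have hJle : ∀ x, (∫ t in (ψ x)..s, (Dt (fun p => Real.exp (k * p.1) * e p) (t, x)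
      + ∑ α, Dx α (fun p => -(Real.exp (k * p.1) * Y α p)) (t, x)))
      ≤ Real.exp (K * T) * ∫ t in Set.Icc (-T) T, q (t, x) := by
    intro x
    have hz : ∀ t, (Dt (fun p => Real.exp (k * p.1) * e p) (t, x)
      + ∑ α, Dx α (fun p => -(Real.exp (k * p.1) * Y α p)) (t, x))
      = Real.exp (k * t) * (k * e (t, x) + (Dt e (t, x) - ∑ α, Dx α (Y α) (t, x))) := by
      intro t
      rw [Dt_exp_mul he]
      simp only [Dx_exp_mul (hY _), Finset.sum_neg_distrib, ← Finset.mul_sum]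
      ring
    simp only [hz]
    set z : ℝ → ℝ := fun t =>
      Real.exp (k * t) * (k * e (t, x) + (Dt e (t, x) - ∑ α, Dx α (Y α) (t, x))) with hzdef
    have hzc : Continuous z := by
      have c0 := he.continuous
      have c1 := continuous_Dt he
      have c2 := fun α => continuous_Dx (hY α) α
      fun_prop
    have hzle : ∀ t ∈ Set.Icc (-T) T, ε * z t ≤ Real.exp (K * T) * q (t, x) := by
      intro t ht
      have h1 := hD t ht x
      have h2 : ε * (Dt e (t, x) - ∑ α, Dx α (Y α) (t, x)) ≤ K * e (t, x) + q (t, x) := by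
        refine (le_abs_self _).trans ?_
        rw [abs_mul, hεa, one_mul]; exact h1
      have h3 : ε * z t = Real.exp (k * t) *
          (-(ε * ε) * K * e (t, x) + ε * (Dt e (t, x) - ∑ α, Dx α (Y α) (t, x))) := by
        simp only [hzdef, hk]; ring
      rw [h3, hε2]
      calc _ ≤ Real.exp (k * t) * q (t, x) :=
            mul_le_mul_of_nonneg_left (by linarith) (Real.exp_pos _).le
        _ ≤ _ := mul_le_mul_of_nonneg_right (hexp t ht).2 (hq0 _)
    have hqx : Continuous fun t => q (t, x) := by fun_prop
    have hmono : ∀ a b, -T ≤ a → a ≤ b → b ≤ T → (∫ t in a..b, ε * z t)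
        ≤ Real.exp (K * T) * ∫ t in Set.Icc (-T) T, q (t, x) := by
      intro a b ha hab hb
      calc (∫ t in a..b, ε * z t) ≤ ∫ t in a..b, Real.exp (K * T) * q (t, x) := by
            refine intervalIntegral.integral_mono_on hab
              (Continuous.intervalIntegrable (by fun_prop) _ _)
              (Continuous.intervalIntegrable (by fun_prop) _ _) fun t ht => hzle t ?_
            exact ⟨ha.trans ht.1, ht.2.trans hb⟩
        _ = Real.exp (K * T) * ∫ t in Set.Icc a b, q (t, x) := by
            rw [intervalIntegral.integral_const_mul, intervalIntegral.integral_of_le hab,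
              integral_Icc_eq_integral_Ioc]
        _ ≤ _ := by
            refine mul_le_mul_of_nonneg_left ?_ (Real.exp_pos _).le
            refine setIntegral_mono_set (hqx.integrableOn_Icc)
              (Filter.Eventually.of_forall fun t => hq0 _)
              (Set.Icc_subset_Icc ha hb).eventuallyLE
    have hx := hεs x
    rcases hε with rfl | rfl
    · have := hmono (ψ x) s (hψT x).1 (by linarith) hs.2
      simpa using this
    · have := hmono s (ψ x) hs.1 (by linarith) (hψT x).2
      rw [intervalIntegral.integral_symm]
      simpa using this
  have hA : MeasurableSet {x | ψ x ≠ s} :=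
    (isOpen_ne_fun hψ.continuous continuous_const).measurableSet
  have hei : Integrable (fun x => e (s, x)) :=
    integrable_graph he.continuous hec continuous_const
  -- lower bound for `I`
  have hIge : ∀ᵐ x, Real.exp (-(K * T)) * Set.indicator {x | ψ x ≠ s} (fun x => e (s, x)) x
      - Real.exp (K * T) * h x ≤ Real.exp (k * s) * e (s, x) - Real.exp (k * ψ x) * e (ψ x, x)
      + ∑ α, -(Real.exp (k * ψ x) * Y α (ψ x, x)) * fderiv ℝ ψ x (Pi.single α 1) := by
    filter_upwards [hbd] with x hx
    by_cases hxs : ψ x = s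
    · have hfd : fderiv ℝ ψ x = 0 := by
        rcases hε with rfl | rfl
        · refine IsLocalMax.fderiv_eq_zero (Filter.Eventually.of_forall fun y => ?_)
          have := hεs y
          rw [hxs]; linarith
        · refine IsLocalMin.fderiv_eq_zero (Filter.Eventually.of_forall fun y => ?_)
          have := hεs y
          rw [hxs]; linarith
      have h1 : x ∉ {x | ψ x ≠ s} := by simpa using hxs
      rw [Set.indicator_of_notMem h1, hfd, hxs]
      have := mul_nonneg (Real.exp_pos (K * T)).le (hh0 x)
      simp
      exact this
    · have h1 : x ∈ {x | ψ x ≠ s} := hxs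
      rw [Set.indicator_of_mem h1]
      have h2 := hx hxs
      have h3 := mul_le_mul_of_nonneg_right (hexp s hs).1 (hepos s hs x)
      have h4 : Real.exp (k * ψ x) * e (ψ x, x)
        - ∑ α, -(Real.exp (k * ψ x) * Y α (ψ x, x)) * fderiv ℝ ψ x (Pi.single α 1)
        = Real.exp (k * ψ x) *
          (e (ψ x, x) + ∑ α, Y α (ψ x, x) * fderiv ℝ ψ x (Pi.single α 1)) := by
        simp only [neg_mul, Finset.sum_neg_distrib, mul_assoc, ← Finset.mul_sum]
        ring
      have h5 := mul_le_mul_of_nonneg_left h2 (Real.exp_pos (k * ψ x)).le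
      have h6 := mul_le_mul_of_nonneg_right (hexp _ (hψT x)).2 (hh0 x)
      linarith
  have hind : Integrable (Set.indicator {x | ψ x ≠ s} (fun x => e (s, x))) := hei.indicator hA
  have key := integral_mono_ae ((hind.const_mul _).sub (hh.const_mul _)) hI hIge
  have key2 := integral_mono hJ (hQi.const_mul (Real.exp (K * T))) hJle
  rw [integral_const_mul, hQ] at key2
  simp only [Pi.sub_apply] at key
  rw [integral_sub (hind.const_mul _) (hh.const_mul _), integral_const_mul, integral_const_mul,
    integral_indicator hA] at key
  have key3 : Real.exp (-(K * T)) * ∫ x in {x | ψ x ≠ s}, e (s, x) ≤ Real.exp (K * T) *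
      ((∫ x, h x) + ∫ p in Set.Icc (-T) T ×ˢ (Set.univ : Set (Fin n → ℝ)), q p) := by
    linarith
  have key4 := mul_le_mul_of_nonneg_left key3 (Real.exp_pos (K * T)).le
  rw [← mul_assoc, ← mul_assoc, ← Real.exp_add, ← Real.exp_add] at key4
  have e1 : K * T + -(K * T) = 0 := by ring
  have e2 : K * T + K * T = 2 * K * T := by ring
  rw [e1, e2, Real.exp_zero, one_mul] at key4
  exact key4

theorem level_null {n : ℕ} (hn : 1 ≤ n) {φ : (Fin n → ℝ) → ℝ} {Λ : NNReal}
    (hφ : LipschitzWith Λ φ)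
    (hne : ∀ᵐ x, fderiv ℝ φ x ≠ 0) (s : ℝ) : ∀ᵐ x, φ x ≠ s := by
  have hm : MeasurableSet {x | φ x = s ∧ DifferentiableAt ℝ φ x} :=
    (measurableSet_eq_fun hφ.continuous.measurable measurable_const).inter
      (measurableSet_of_differentiableAt ℝ φ)
  set v : Fin n → ℝ := fun _ => 1 with hv
  have hv0 : v ≠ 0 := fun h => by
    have := congrFun h ⟨0, hn⟩
    simp [hv] at this
  have ha : ApproximatesLinearOn (fun x => φ x • v) (0 : (Fin n → ℝ) →L[ℝ] (Fin n → ℝ))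
      {x | φ x = s ∧ DifferentiableAt ℝ φ x} 0 := by
    intro x hx y hy
    simp [hx.1, hy.1]
  have := ha.norm_fderiv_sub_le volume hm (fun x => (fderiv ℝ φ x).smulRight v)
    (fun x hx => (hx.2.hasFDerivAt.smul_const v).hasFDerivWithinAt)
  rw [ae_restrict_iff' hm] at this
  filter_upwards [this, hne, hφ.ae_differentiableAt] with x h1 h2 h3 h4
  have h5 := h1 ⟨h4, h3⟩
  rw [sub_zero, nonpos_iff_eq_zero, nnnorm_eq_zero] at h5
  apply h2
  ext y
  have h6 := congrFun (congrArg (fun A => A y) h5) ⟨0, hn⟩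
  simpa [hv] using h6

theorem full_estimate {n : ℕ} {e q : ℝ × (Fin n → ℝ) → ℝ} {Y : Fin n → ℝ × (Fin n → ℝ) → ℝ}
    (he : ContDiff ℝ 1 e) (hec : HasCompactSupport e)
    (hY : ∀ α, ContDiff ℝ 1 (Y α)) (hYc : ∀ α, HasCompactSupport (Y α))
    {T K : ℝ} (hK : 0 ≤ K)
    (hepos : ∀ t ∈ Set.Icc (-T) T, ∀ x, 0 ≤ e (t, x))
    (hD : ∀ t ∈ Set.Icc (-T) T, ∀ x,
      |Dt e (t, x) - ∑ α, Dx α (Y α) (t, x)| ≤ K * e (t, x) + q (t, x))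
    (hqc : Continuous q) (hq0 : ∀ p, 0 ≤ q p)
    (hqi : IntegrableOn q (Set.Icc (-T) T ×ˢ (Set.univ : Set (Fin n → ℝ))))
    {φ : (Fin n → ℝ) → ℝ} {Λ : NNReal} (hφ : LipschitzWith Λ φ)
    (hφT : ∀ x, φ x ∈ Set.Icc (-T) T) {s : ℝ} (hs : s ∈ Set.Icc (-T) T)
    {h : (Fin n → ℝ) → ℝ} (hh : Integrable h)
    (hh0 : ∀ x, 0 ≤ h x) (hnull : ∀ᵐ x, φ x ≠ s)
    (hbd : ∀ᵐ x, e (φ x, x) + ∑ α, Y α (φ x, x) * fderiv ℝ φ x (Pi.single α 1) ≤ h x) :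
    ∫ x, e (s, x) ≤ 2 * Real.exp (2 * K * T) *
      ((∫ x, h x) + ∫ p in Set.Icc (-T) T ×ˢ (Set.univ : Set (Fin n → ℝ)), q p) := by
  have hc := hφ.continuous
  have h1 := half_estimate he hec hY hYc hK (ε := 1) (Or.inl rfl) hepos hD hqc hq0 hqi
    (ψ := fun x => min (φ x) s) (hφ.min_const s)
    (fun x => ⟨le_min (hφT x).1 hs.1, (min_le_right _ _).trans hs.2⟩) hs
    (fun x => by have := min_le_right (φ x) s; linarith) hh hh0 (by
      filter_upwards [hbd] with x hx hne
      have hlt : φ x < s := by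
        by_contra hcon
        exact hne (min_eq_right (not_lt.mp hcon))
      have hev : (fun x => min (φ x) s) =ᶠ[nhds x] φ := by
        filter_upwards [hc.continuousAt.eventually (gt_mem_nhds hlt)] with y hy
        exact min_eq_left hy.le
      rw [hev.fderiv_eq]
      simpa only [min_eq_left hlt.le] using hx)
  have h2 := half_estimate he hec hY hYc hK (ε := -1) (Or.inr rfl) hepos hD hqc hq0 hqi
    (ψ := fun x => max (φ x) s) (hφ.max_const s)
    (fun x => ⟨hs.1.trans (le_max_right _ _), max_le (hφT x).2 hs.2⟩) hs
    (fun x => by have := le_max_right (φ x) s; linarith) hh hh0 (by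
      filter_upwards [hbd] with x hx hne
      have hlt : s < φ x := by
        by_contra hcon
        exact hne (max_eq_right (not_lt.mp hcon))
      have hev : (fun x => max (φ x) s) =ᶠ[nhds x] φ := by
        filter_upwards [hc.continuousAt.eventually (lt_mem_nhds hlt)] with y hy
        exact max_eq_left hy.le
      rw [hev.fderiv_eq]
      simpa only [max_eq_left hlt.le] using hx)
  have hei : Integrable (fun x => e (s, x)) :=
    integrable_graph he.continuous hec continuous_const
  have hmB : MeasurableSet {x | max (φ x) s ≠ s} :=
    (isOpen_ne_fun (by fun_prop) continuous_const).measurableSet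
  have hdisj : Disjoint {x | min (φ x) s ≠ s} {x | max (φ x) s ≠ s} := by
    rw [Set.disjoint_left]
    intro x hx hx'
    simp only [Set.mem_ofPred_eq, ne_eq, min_eq_right_iff, max_eq_right_iff, not_le] at hx hx'
    linarith
  have hun : ({x | min (φ x) s ≠ s} ∪ {x | max (φ x) s ≠ s} : Set (Fin n → ℝ))
      =ᵐ[volume] Set.univ := by
    rw [Filter.eventuallyEq_univ]
    filter_upwards [hnull] with x hx
    simp only [Set.mem_union, Set.mem_ofPred_eq, ne_eq, min_eq_right_iff, max_eq_right_iff, not_le]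
    exact lt_or_gt_of_ne hx
  have h3 := setIntegral_union hdisj hmB hei.integrableOn hei.integrableOn
  rw [setIntegral_congr_set hun, setIntegral_univ] at h3
  rw [h3]
  linarith

theorem alg_identity {n : ℕ} (G Gt Gx H : Fin n → Fin n → ℝ) (hG : ∀ α β, G α β = G β α)
    (d m : Fin n → ℝ) (v vt vtt : ℝ) :
    (2 * vt * vtt + (∑ α, ∑ β, (Gt α β * d α * d β + G α β * m α * d β + G α β * d α * m β))
      + 2 * v * vt)
      - ∑ α, (2 * m α * (∑ β, G α β * d β)
        + 2 * vt * ∑ β, (Gx α β * d β + G α β * H α β))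
    = 2 * vt * (vtt - ∑ α, ∑ β, G α β * H α β) + (∑ α, ∑ β, Gt α β * d α * d β) + 2 * v * vt
      - 2 * vt * ∑ α, ∑ β, Gx α β * d β := by
  have hsw : ∑ α, ∑ β, G α β * d α * m β = ∑ α, ∑ β, G α β * m α * d β := by
    rw [Finset.sum_comm]
    refine Finset.sum_congr rfl fun α _ => Finset.sum_congr rfl fun β _ => ?_
    rw [hG β α]; ring
  have h1 : ∑ α, 2 * m α * (∑ β, G α β * d β) = 2 * ∑ α, ∑ β, G α β * m α * d β := by
    rw [Finset.mul_sum]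
    refine Finset.sum_congr rfl fun α _ => ?_
    rw [Finset.mul_sum, Finset.mul_sum]
    refine Finset.sum_congr rfl fun β _ => by ring
  simp only [Finset.sum_add_distrib, hsw, h1, mul_add, ← Finset.mul_sum]
  ring

theorem alg_bound {n : ℕ} {M : ℝ} (hM : 0 ≤ M) (Gt Gx : Fin n → Fin n → ℝ)
    (hGt : ∀ α β, |Gt α β| ≤ M) (hGx : ∀ α β, |Gx α β| ≤ M)
    (d b : Fin n → ℝ) (hb : ∀ α, |b α| ≤ M) (v vt f b0 c : ℝ) (hb0 : |b0| ≤ M) (hc : |c| ≤ M) :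
    |2 * vt * (f - b0 * vt - (∑ α, b α * d α) - c * v) + (∑ α, ∑ β, Gt α β * d α * d β)
      + 2 * v * vt - 2 * vt * ∑ α, ∑ β, Gx α β * d β|
    ≤ (3 + 5 * M + n * M + (2 * M + n * M) * n) * (vt ^ 2 + (∑ α, d α ^ 2) + v ^ 2) + f ^ 2 := by
  set s := ∑ α, |d α| with hs
  set S := ∑ α, d α ^ 2 with hS
  have hn0 : (0 : ℝ) ≤ n := Nat.cast_nonneg n
  have hs0 : 0 ≤ s := Finset.sum_nonneg fun _ _ => abs_nonneg _
  have hS0 : 0 ≤ S := Finset.sum_nonneg fun _ _ => sq_nonneg _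
  have hsS : s ^ 2 ≤ n * S := by
    have := sq_sum_le_card_mul_sum_sq (s := Finset.univ) (f := fun α => |d α|)
    simpa [sq_abs] using this
  have h1 : |∑ α, b α * d α| ≤ M * s := by
    rw [hs, Finset.mul_sum]
    refine (Finset.abs_sum_le_sum_abs _ _).trans (Finset.sum_le_sum fun α _ => ?_)
    rw [abs_mul]
    exact mul_le_mul_of_nonneg_right (hb α) (abs_nonneg _)
  have h2 : |∑ α, ∑ β, Gt α β * d α * d β| ≤ M * s ^ 2 := by
    have : M * s ^ 2 = ∑ α, ∑ β, M * |d α| * |d β| := by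
      rw [sq, hs, Finset.sum_mul_sum, Finset.mul_sum]
      refine Finset.sum_congr rfl fun α _ => ?_
      rw [Finset.mul_sum]
      exact Finset.sum_congr rfl fun β _ => by ring
    rw [this]
    refine (Finset.abs_sum_le_sum_abs _ _).trans (Finset.sum_le_sum fun α _ => ?_)
    refine (Finset.abs_sum_le_sum_abs _ _).trans (Finset.sum_le_sum fun β _ => ?_)
    rw [abs_mul, abs_mul]
    gcongr
    exact hGt α β
  have h3 : |∑ α, ∑ β, Gx α β * d β| ≤ n * (M * s) := by
    have : (n : ℝ) * (M * s) = ∑ _α : Fin n, M * s := by simp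
    rw [this]
    refine (Finset.abs_sum_le_sum_abs _ _).trans (Finset.sum_le_sum fun α _ => ?_)
    rw [hs, Finset.mul_sum]
    refine (Finset.abs_sum_le_sum_abs _ _).trans (Finset.sum_le_sum fun β _ => ?_)
    rw [abs_mul]
    exact mul_le_mul_of_nonneg_right (hGx α β) (abs_nonneg _)
  set B := ∑ α, b α * d α
  set P := ∑ α, ∑ β, Gt α β * d α * d β
  set Q := ∑ α, ∑ β, Gx α β * d β
  have a1 : |2 * vt * f| ≤ vt ^ 2 + f ^ 2 := by
    rw [abs_le]; constructor <;> nlinarith [sq_nonneg (vt + f), sq_nonneg (vt - f)]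
  have a2 : |2 * vt * (b0 * vt)| ≤ 2 * M * vt ^ 2 := by
    have : |2 * vt * (b0 * vt)| = 2 * |b0| * vt ^ 2 := by
      rw [show 2 * vt * (b0 * vt) = b0 * (2 * vt ^ 2) by ring, abs_mul,
        abs_of_nonneg (by positivity : 0 ≤ 2 * vt ^ 2)]
      ring
    rw [this]; gcongr
  have hvt2 : |vt| ^ 2 = vt ^ 2 := sq_abs _
  have hv2 : |v| ^ 2 = v ^ 2 := sq_abs _
  have a3 : |2 * vt * B| ≤ M * (vt ^ 2 + s ^ 2) := by
    calc |2 * vt * B| = 2 * |vt| * |B| := by rw [abs_mul, abs_mul, abs_two]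
      _ ≤ 2 * |vt| * (M * s) := by gcongr
      _ = M * (2 * |vt| * s) := by ring
      _ ≤ M * (|vt| ^ 2 + s ^ 2) := by gcongr; nlinarith [sq_nonneg (|vt| - s)]
      _ = _ := by rw [hvt2]
  have a4 : |2 * vt * (c * v)| ≤ M * (vt ^ 2 + v ^ 2) := by
    calc |2 * vt * (c * v)| = 2 * |vt| * (|c| * |v|) := by rw [abs_mul, abs_mul, abs_mul, abs_two]
      _ ≤ 2 * |vt| * (M * |v|) := by gcongr
      _ = M * (2 * |vt| * |v|) := by ring
      _ ≤ M * (|vt| ^ 2 + |v| ^ 2) := by gcongr; nlinarith [sq_nonneg (|vt| - |v|)]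
      _ = _ := by rw [hvt2, hv2]
  have a5 : |2 * v * vt| ≤ v ^ 2 + vt ^ 2 := by
    rw [abs_le]; constructor <;> nlinarith [sq_nonneg (v + vt), sq_nonneg (v - vt)]
  have a6 : |2 * vt * Q| ≤ n * M * (vt ^ 2 + s ^ 2) := by
    calc |2 * vt * Q| = 2 * |vt| * |Q| := by rw [abs_mul, abs_mul, abs_two]
      _ ≤ 2 * |vt| * (n * (M * s)) := by gcongr
      _ = n * M * (2 * |vt| * s) := by ring
      _ ≤ n * M * (|vt| ^ 2 + s ^ 2) := by gcongr; nlinarith [sq_nonneg (|vt| - s)]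
      _ = _ := by rw [hvt2]
  have tot : |2 * vt * (f - b0 * vt - B - c * v) + P + 2 * v * vt - 2 * vt * Q|
      ≤ (vt ^ 2 + f ^ 2) + 2 * M * vt ^ 2 + M * (vt ^ 2 + s ^ 2) + M * (vt ^ 2 + v ^ 2)
        + M * s ^ 2 + (v ^ 2 + vt ^ 2) + n * M * (vt ^ 2 + s ^ 2) := by
    rw [abs_le] at *
    constructor <;> linarith [a1.1, a1.2, a2.1, a2.2, a3.1, a3.2, a4.1, a4.2, a5.1, a5.2,
      a6.1, a6.2, h2.1, h2.2]
  refine tot.trans ?_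
  have hq : (2 * M + n * M) * s ^ 2 ≤ (2 * M + n * M) * (n * S) :=
    mul_le_mul_of_nonneg_left hsS (by positivity)
  have p1 : 0 ≤ n * M * S := by positivity
  have p2 : 0 ≤ n * M * v ^ 2 := by positivity
  have p3 : 0 ≤ M * S := by positivity
  have p4 : 0 ≤ M * v ^ 2 := by positivity
  have p5 : 0 ≤ M * vt ^ 2 := by positivity
  have p6 : 0 ≤ (2 * M + n * M) * n * vt ^ 2 := by positivity
  have p7 : 0 ≤ (2 * M + n * M) * n * v ^ 2 := by positivity
  nlinarith [sq_nonneg v, sq_nonneg vt]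

theorem alg_flux {n : ℕ} {C₂ : ℝ} (hC₂ : 0 ≤ C₂) (G : Fin n → Fin n → ℝ)
    (hG : ∀ α β, G α β = G β α)
    (hell : ∀ ξ : Fin n → ℝ, (∑ α, ∑ β, G α β * ξ α * ξ β) ≤ C₂ * ∑ α, ξ α ^ 2)
    (d r : Fin n → ℝ) (hr : ∑ α, ∑ β, G α β * r α * r β = 1) (v vt : ℝ) :
    (vt ^ 2 + (∑ α, ∑ β, G α β * d α * d β) + v ^ 2)
      + ∑ α, (2 * vt * ∑ β, G α β * d β) * r α
    ≤ (C₂ + 1) * (v ^ 2 + ∑ α, (d α + vt * r α) ^ 2) := by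
  have h1 := hell (fun α => d α + vt * r α)
  have hsw : ∑ α, ∑ β, G α β * d α * r β = ∑ α, ∑ β, G α β * r α * d β := by
    rw [Finset.sum_comm]
    refine Finset.sum_congr rfl fun α _ => Finset.sum_congr rfl fun β _ => ?_
    rw [hG β α]; ring
  have h2 : ∑ α, ∑ β, G α β * (d α + vt * r α) * (d β + vt * r β)
      = (∑ α, ∑ β, G α β * d α * d β) + 2 * vt * (∑ α, ∑ β, G α β * r α * d β) + vt ^ 2 := by
    have : ∀ α β, G α β * (d α + vt * r α) * (d β + vt * r β)
        = G α β * d α * d β + vt * (G α β * d α * r β) + vt * (G α β * r α * d β)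
          + vt ^ 2 * (G α β * r α * r β) := fun α β => by ring
    simp only [this, Finset.sum_add_distrib, ← Finset.mul_sum, hsw, hr]
    ring
  have h3 : ∑ α, (2 * vt * ∑ β, G α β * d β) * r α
      = 2 * vt * (∑ α, ∑ β, G α β * r α * d β) := by
    rw [Finset.mul_sum]
    refine Finset.sum_congr rfl fun α _ => ?_
    rw [Finset.mul_sum, Finset.mul_sum, Finset.sum_mul]
    exact Finset.sum_congr rfl fun β _ => by ring
  rw [h3]
  rw [h2] at h1
  have h4 : 0 ≤ ∑ α, (d α + vt * r α) ^ 2 := Finset.sum_nonneg fun _ _ => sq_nonneg _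
  nlinarith [sq_nonneg v, mul_nonneg hC₂ (sq_nonneg v)]

/-- The energy density. -/
noncomputable def eDens {n : ℕ} (g : Fin n → Fin n → ℝ × (Fin n → ℝ) → ℝ)
    (v : ℝ × (Fin n → ℝ) → ℝ) (p : ℝ × (Fin n → ℝ)) : ℝ :=
  (Dt v p) ^ 2 + (∑ α, ∑ β, g α β p * Dx α v p * Dx β v p) + (v p) ^ 2

/-- The energy flux. -/
noncomputable def eFlux {n : ℕ} (g : Fin n → Fin n → ℝ × (Fin n → ℝ) → ℝ)
    (v : ℝ × (Fin n → ℝ) → ℝ) (α : Fin n) (p : ℝ × (Fin n → ℝ)) : ℝ :=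
  2 * Dt v p * ∑ β, g α β p * Dx β v p

theorem contDiff_Dt {n : ℕ} {v : ℝ × (Fin n → ℝ) → ℝ} (hv : ContDiff ℝ 2 v) :
    ContDiff ℝ 1 (Dt v) :=
  (hv.fderiv_right (m := 1) (by norm_num)).clm_apply contDiff_const

theorem contDiff_Dx {n : ℕ} {v : ℝ × (Fin n → ℝ) → ℝ} (hv : ContDiff ℝ 2 v) (α : Fin n) :
    ContDiff ℝ 1 (Dx α v) :=
  (hv.fderiv_right (m := 1) (by norm_num)).clm_apply contDiff_const

theorem symm_Dt_Dx {n : ℕ} {v : ℝ × (Fin n → ℝ) → ℝ} (hv : ContDiff ℝ 2 v) (α : Fin n)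
    (p : ℝ × (Fin n → ℝ)) : Dx α (Dt v) p = Dt (Dx α v) p := by
  have h1 : DifferentiableAt ℝ (fderiv ℝ v) p :=
    (hv.fderiv_right (m := 1) (by norm_num)).differentiable (by simp) p
  have hs : IsSymmSndFDerivAt ℝ v p :=
    hv.contDiffAt.isSymmSndFDerivAt (by simp [minSmoothness_of_isRCLikeNormedField])
  have h2 : ∀ u w, fderiv ℝ (fun q => fderiv ℝ v q u) p w = fderiv ℝ (fderiv ℝ v) p w u := by
    intro u w
    rw [fderiv_clm_apply h1 (differentiableAt_const u)]
    simp
  change fderiv ℝ (fun q => fderiv ℝ v q (1, 0)) p (0, Pi.single α 1)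
    = fderiv ℝ (fun q => fderiv ℝ v q (0, Pi.single α 1)) p (1, 0)
  rw [h2, h2]
  exact hs _ _

theorem contDiff_eDens {n : ℕ} {g : Fin n → Fin n → ℝ × (Fin n → ℝ) → ℝ}
    {v : ℝ × (Fin n → ℝ) → ℝ} (hg : ∀ α β, ContDiff ℝ 1 (g α β)) (hv : ContDiff ℝ 2 v) :
    ContDiff ℝ 1 (eDens g v) := by
  have h1 := contDiff_Dt hv
  have h2 := contDiff_Dx hv
  have h3 : ContDiff ℝ 1 v := hv.of_le (by norm_num)
  unfold eDens
  refine ((h1.pow 2).add ?_).add (h3.pow 2)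
  exact ContDiff.sum fun α _ => ContDiff.sum fun β _ => ((hg α β).mul (h2 α)).mul (h2 β)

theorem contDiff_eFlux {n : ℕ} {g : Fin n → Fin n → ℝ × (Fin n → ℝ) → ℝ}
    {v : ℝ × (Fin n → ℝ) → ℝ} (hg : ∀ α β, ContDiff ℝ 1 (g α β)) (hv : ContDiff ℝ 2 v)
    (α : Fin n) : ContDiff ℝ 1 (eFlux g v α) := by
  have h1 := contDiff_Dt hv
  have h2 := contDiff_Dx hv
  unfold eFlux
  exact (contDiff_const.mul h1).mul (ContDiff.sum fun β _ => (hg α β).mul (h2 β))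

theorem fderiv_eDens {n : ℕ} {g : Fin n → Fin n → ℝ × (Fin n → ℝ) → ℝ}
    {v : ℝ × (Fin n → ℝ) → ℝ} (hg : ∀ α β, ContDiff ℝ 1 (g α β)) (hv : ContDiff ℝ 2 v)
    (p u : ℝ × (Fin n → ℝ)) :
    fderiv ℝ (eDens g v) p u = 2 * Dt v p * fderiv ℝ (Dt v) p u
      + (∑ α, ∑ β, (fderiv ℝ (g α β) p u * Dx α v p * Dx β v p
        + g α β p * fderiv ℝ (Dx α v) p u * Dx β v p
        + g α β p * Dx α v p * fderiv ℝ (Dx β v) p u)) + 2 * v p * fderiv ℝ v p u := by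
  have h1 := ((contDiff_Dt hv).differentiable (by simp) p).hasFDerivAt
  have h2 := fun α => ((contDiff_Dx hv α).differentiable (by simp) p).hasFDerivAt
  have h3 := (hv.differentiable (by simp) p).hasFDerivAt
  have h4 := fun α β => ((hg α β).differentiable (by simp) p).hasFDerivAt
  have h5 := ((h1.pow 2).fun_add (HasFDerivAt.fun_sum (u := Finset.univ) fun α _ =>
    HasFDerivAt.fun_sum (u := Finset.univ) fun β _ =>
      ((h4 α β).fun_mul (h2 α)).fun_mul (h2 β))).fun_add (h3.pow 2)
  rw [show fderiv ℝ (eDens g v) p = _ from h5.fderiv]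
  simp only [add_apply, smul_apply, sum_apply, smul_eq_mul]
  congr 1
  · congr 1
    · simp
    · refine Finset.sum_congr rfl fun α _ => Finset.sum_congr rfl fun β _ => by ring
  · simp

theorem fderiv_eFlux {n : ℕ} {g : Fin n → Fin n → ℝ × (Fin n → ℝ) → ℝ}
    {v : ℝ × (Fin n → ℝ) → ℝ} (hg : ∀ α β, ContDiff ℝ 1 (g α β)) (hv : ContDiff ℝ 2 v)
    (α : Fin n) (p u : ℝ × (Fin n → ℝ)) :
    fderiv ℝ (eFlux g v α) p u = 2 * fderiv ℝ (Dt v) p u * (∑ β, g α β p * Dx β v p)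
      + 2 * Dt v p * ∑ β, (fderiv ℝ (g α β) p u * Dx β v p
        + g α β p * fderiv ℝ (Dx β v) p u) := by
  have h1 := ((contDiff_Dt hv).differentiable (by simp) p).hasFDerivAt
  have h2 := fun α => ((contDiff_Dx hv α).differentiable (by simp) p).hasFDerivAt
  have h4 := fun α β => ((hg α β).differentiable (by simp) p).hasFDerivAt
  have h5 := (h1.const_mul 2).fun_mul (HasFDerivAt.fun_sum (u := Finset.univ) fun β _ =>
      (h4 α β).fun_mul (h2 β))
  rw [show fderiv ℝ (eFlux g v α) p = _ from h5.fderiv]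
  simp only [add_apply, smul_apply, sum_apply, smul_eq_mul]
  rw [add_comm]
  congr 1
  · ring
  · congr 1
    exact Finset.sum_congr rfl fun β _ => by ring

theorem div_identity {n : ℕ} {g : Fin n → Fin n → ℝ × (Fin n → ℝ) → ℝ}
    {v : ℝ × (Fin n → ℝ) → ℝ} (hg : ∀ α β, ContDiff ℝ 1 (g α β))
    (hgs : ∀ α β p, g α β p = g β α p) (hv : ContDiff ℝ 2 v) (p : ℝ × (Fin n → ℝ)) :
    Dt (eDens g v) p - ∑ α, Dx α (eFlux g v α) p
    = 2 * Dt v p * (Dt (Dt v) p - ∑ α, ∑ β, g α β p * Dx α (Dx β v) p)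
      + (∑ α, ∑ β, Dt (g α β) p * Dx α v p * Dx β v p) + 2 * v p * Dt v p
      - 2 * Dt v p * ∑ α, ∑ β, Dx α (g α β) p * Dx β v p := by
  have h := alg_identity (fun α β => g α β p) (fun α β => Dt (g α β) p)
    (fun α β => Dx α (g α β) p) (fun α β => Dx α (Dx β v) p) (fun α β => hgs α β p)
    (fun α => Dx α v p) (fun α => Dt (Dx α v) p) (v p) (Dt v p) (Dt (Dt v) p)
  rw [← h]
  congr 1
  · exact fderiv_eDens hg hv p (1, 0)
  · refine Finset.sum_congr rfl fun α _ => ?_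
    rw [← symm_Dt_Dx hv α p]
    exact fderiv_eFlux hg hv α p (0, Pi.single α 1)

theorem cs_eDens {n : ℕ} {g : Fin n → Fin n → ℝ × (Fin n → ℝ) → ℝ}
    {v : ℝ × (Fin n → ℝ) → ℝ} (hv : HasCompactSupport v) : HasCompactSupport (eDens g v) := by
  refine hv.mono' ?_
  refine (Function.support_subset_iff').2 fun p hp => ?_
  have h0 : v p = 0 := image_eq_zero_of_notMem_tsupport hp
  have h1 : fderiv ℝ v p = 0 :=
    image_eq_zero_of_notMem_tsupport fun h => hp (tsupport_fderiv_subset ℝ h)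
  simp [eDens, Dt, Dx, h0, h1]

theorem cs_eFlux {n : ℕ} {g : Fin n → Fin n → ℝ × (Fin n → ℝ) → ℝ}
    {v : ℝ × (Fin n → ℝ) → ℝ} (hv : HasCompactSupport v) (α : Fin n) :
    HasCompactSupport (eFlux g v α) := by
  refine hv.mono' ?_
  refine (Function.support_subset_iff').2 fun p hp => ?_
  have h1 : fderiv ℝ v p = 0 :=
    image_eq_zero_of_notMem_tsupport fun h => hp (tsupport_fderiv_subset ℝ h)
  simp [eFlux, Dt, Dx, h1]

theorem integrable_trace {n : ℕ} {w : (Fin n → ℝ) → ℝ} {L : NNReal} (hw : LipschitzWith L w)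
    (hc : HasCompactSupport w) :
    Integrable (fun x => w x ^ 2 + ∑ α, (fderiv ℝ w x (Pi.single α 1)) ^ 2) := by
  refine Integrable.add ?_ (integrable_finsetSum _ fun α _ => ?_)
  · refine Continuous.integrable_of_hasCompactSupport (hw.continuous.pow 2) ?_
    exact hc.comp_left (g := fun y : ℝ => y ^ 2) (by simp)
  · have hm := measurable_fderiv_apply_const ℝ w (Pi.single α 1)
    have hb : ∀ x, ‖(fderiv ℝ w x (Pi.single α 1)) ^ 2‖
        ≤ (L * ‖(Pi.single α 1 : Fin n → ℝ)‖) ^ 2 := by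
      intro x
      rw [norm_pow]
      refine pow_le_pow_left₀ (norm_nonneg _) ?_ 2
      exact ((fderiv ℝ w x).le_opNorm _).trans
        (mul_le_mul_of_nonneg_right (norm_fderiv_le_of_lipschitz ℝ hw) (norm_nonneg _))
    have hon : IntegrableOn (fun x => (fderiv ℝ w x (Pi.single α 1)) ^ 2) (tsupport w) :=
      Measure.integrableOn_of_bounded hc.isCompact.measure_lt_top.ne
        (hm.pow_const 2).aestronglyMeasurable (Filter.Eventually.of_forall hb)
    refine (integrableOn_iff_integrable_of_support_subset ?_).1 hon
    refine (Function.support_subset_iff').2 fun x hx => ?_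
    have h1 : fderiv ℝ w x = 0 :=
      image_eq_zero_of_notMem_tsupport fun h => hx (tsupport_fderiv_subset ℝ h)
    simp [h1]

theorem fderiv_zero_of_vanish {n : ℕ} {v : ℝ × (Fin n → ℝ) → ℝ} {R : ℝ}
    (h : ∀ (t : ℝ) (x : Fin n → ℝ), R ≤ ‖x‖ → v (t, x) = 0) {p : ℝ × (Fin n → ℝ)}
    (hp : R < ‖p.2‖) : v =ᶠ[nhds p] fun _ => 0 := by
  have : Continuous fun q : ℝ × (Fin n → ℝ) => ‖q.2‖ := by fun_prop
  filter_upwards [this.continuousAt.eventually (lt_mem_nhds hp)] with q hq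
  exact h q.1 q.2 hq.le

theorem core {n : ℕ} (hn : 1 ≤ n) {T C₁ C₂ M R : ℝ}
    (hC₁ : 0 < C₁) (hC₂ : 0 < C₂) (hM : 0 < M)
    {g : Fin n → Fin n → ℝ × (Fin n → ℝ) → ℝ} (hg : ∀ α β, ContDiff ℝ 1 (g α β))
    (hgs : ∀ α β p, g α β p = g β α p)
    (hell : ∀ t ∈ Set.Icc (-T) T, ∀ x : Fin n → ℝ, ‖x‖ ≤ R → ∀ ξ : Fin n → ℝ,
      C₁ * (∑ α, (ξ α) ^ 2) ≤ (∑ α, ∑ β, g α β (t, x) * ξ α * ξ β) ∧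
      (∑ α, ∑ β, g α β (t, x) * ξ α * ξ β) ≤ C₂ * (∑ α, (ξ α) ^ 2))
    (hgM : ∀ α β, ∀ t ∈ Set.Icc (-T) T, ∀ x : Fin n → ℝ, ‖x‖ ≤ R →
      |Dt (g α β) (t, x)| ≤ M ∧ ∀ μ, |Dx μ (g α β) (t, x)| ≤ M)
    {b0 : ℝ × (Fin n → ℝ) → ℝ} {b : Fin n → ℝ × (Fin n → ℝ) → ℝ} {c : ℝ × (Fin n → ℝ) → ℝ}
    (hb : ∀ t ∈ Set.Icc (-T) T, ∀ x : Fin n → ℝ,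
      |b0 (t, x)| ≤ M ∧ (∀ α, |b α (t, x)| ≤ M) ∧ |c (t, x)| ≤ M)
    {f : ℝ × (Fin n → ℝ) → ℝ} (hf : Continuous f)
    (hfi : IntegrableOn (fun p => (f p) ^ 2)
      (Set.Icc (-T) T ×ˢ (Set.univ : Set (Fin n → ℝ))))
    {φ : (Fin n → ℝ) → ℝ} {Λ : NNReal} (hφ : LipschitzWith Λ φ)
    (hφT : ∀ x, φ x ∈ Set.Icc (-T) T)
    (hφ0 : ∀ᵐ x : Fin n → ℝ, fderiv ℝ φ x ≠ 0)
    (hchar : ∀ᵐ x : Fin n → ℝ, ‖x‖ ≤ R →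
      (∑ α, ∑ β, g α β (φ x, x) * fderiv ℝ φ x (Pi.single α 1)
        * fderiv ℝ φ x (Pi.single β 1)) = 1)
    {v : ℝ × (Fin n → ℝ) → ℝ} (hv : ContDiff ℝ 2 v) (hvc : HasCompactSupport v)
    (hvR : ∀ (t : ℝ) (x : Fin n → ℝ), R ≤ ‖x‖ → v (t, x) = 0)
    (hpde : ∀ t ∈ Set.Icc (-T) T, ∀ x : Fin n → ℝ, ‖x‖ ≤ R →
      Dt (Dt v) (t, x) - (∑ α, ∑ β, g α β (t, x) * Dx α (Dx β v) (t, x))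
        + b0 (t, x) * Dt v (t, x) + (∑ α, b α (t, x) * Dx α v (t, x)) + c (t, x) * v (t, x)
        = f (t, x))
    {s : ℝ} (hs : s ∈ Set.Icc (-T) T) :
    energy g v s ≤ 2 * Real.exp (2 * ((3 + 5 * M + n * M + (2 * M + n * M) * n) * (1 + 1 / C₁))
        * T) * (C₂ + 1) * ((∫ x : Fin n → ℝ,
                ((v (φ x, x)) ^ 2
                  + ∑ α, (fderiv ℝ (fun y => v (φ y, y)) x (Pi.single α 1)) ^ 2))
              + ∫ p in Set.Icc (-T) T ×ˢ (Set.univ : Set (Fin n → ℝ)), (f p) ^ 2) := by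
  set K0 : ℝ := 3 + 5 * M + n * M + (2 * M + n * M) * n with hK0
  have hK0p : 0 ≤ K0 := by positivity
  have hzero : ∀ p : ℝ × (Fin n → ℝ), R < ‖p.2‖ → v p = 0 ∧ fderiv ℝ v p = 0 := by
    intro p hp
    have h1 := fderiv_zero_of_vanish hvR hp
    exact ⟨h1.self_of_nhds, by rw [h1.fderiv_eq]; simp⟩
  obtain ⟨L, hL⟩ := ContDiff.lipschitzWith_of_hasCompactSupport hvc hv (by simp)
  have hw : LipschitzWith (L * max Λ 1) (fun x => v (φ x, x)) :=
    hL.comp (hφ.prodMk LipschitzWith.id)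
  have hwi := integrable_trace hw (cs_of_vanish (R := R) fun x hx => hvR _ x hx.le)
  -- lower bound for the energy density
  have hlow : ∀ t ∈ Set.Icc (-T) T, ∀ x : Fin n → ℝ, ‖x‖ ≤ R →
      C₁ * (∑ α, (Dx α v (t, x)) ^ 2)
        ≤ ∑ α, ∑ β, g α β (t, x) * Dx α v (t, x) * Dx β v (t, x) :=
    fun t ht x hx => (hell t ht x hx (fun α => Dx α v (t, x))).1
  have hepos : ∀ t ∈ Set.Icc (-T) T, ∀ x, 0 ≤ eDens g v (t, x) := by
    intro t ht x
    by_cases hx : ‖x‖ ≤ R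
    · have h1 := hlow t ht x hx
      have h2 : 0 ≤ C₁ * (∑ α, (Dx α v (t, x)) ^ 2) :=
        mul_nonneg hC₁.le (Finset.sum_nonneg fun _ _ => sq_nonneg _)
      unfold eDens
      have := sq_nonneg (Dt v (t, x))
      have := sq_nonneg (v (t, x))
      linarith
    · obtain ⟨h1, h2⟩ := hzero (t, x) (not_le.mp hx)
      simp [eDens, Dt, Dx, h1, h2]
  have hD : ∀ t ∈ Set.Icc (-T) T, ∀ x,
      |Dt (eDens g v) (t, x) - ∑ α, Dx α (eFlux g v α) (t, x)|
        ≤ (K0 * (1 + 1 / C₁)) * eDens g v (t, x) + f (t, x) ^ 2 := by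
    intro t ht x
    rw [div_identity hg hgs hv]
    by_cases hx : ‖x‖ ≤ R
    · have hb' := hb t ht x
      have e1 : Dt (Dt v) (t, x) - (∑ α, ∑ β, g α β (t, x) * Dx α (Dx β v) (t, x))
          = f (t, x) - b0 (t, x) * Dt v (t, x) - (∑ α, b α (t, x) * Dx α v (t, x))
            - c (t, x) * v (t, x) := by
        have := hpde t ht x hx
        linarith
      rw [e1]
      refine (alg_bound hM.le (fun α β => Dt (g α β) (t, x)) (fun α β => Dx α (g α β) (t, x))
        (fun α β => (hgM α β t ht x hx).1) (fun α β => (hgM α β t ht x hx).2 α)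
        (fun α => Dx α v (t, x)) (fun α => b α (t, x)) hb'.2.1 (v (t, x)) (Dt v (t, x))
        (f (t, x)) (b0 (t, x)) (c (t, x)) hb'.1 hb'.2.2).trans ?_
      refine add_le_add_left ?_ _
      rw [mul_assoc]
      refine mul_le_mul_of_nonneg_left ?_ hK0p
      have h1 := hlow t ht x hx
      have h2 : ∑ α, (Dx α v (t, x)) ^ 2
          ≤ 1 / C₁ * ∑ α, ∑ β, g α β (t, x) * Dx α v (t, x) * Dx β v (t, x) := by
        rw [one_div, ← div_eq_inv_mul, le_div_iff₀ hC₁]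
        linarith
      have h3 : 0 ≤ C₁ * (∑ α, (Dx α v (t, x)) ^ 2) :=
        mul_nonneg hC₁.le (Finset.sum_nonneg fun _ _ => sq_nonneg _)
      have h4 : 0 ≤ 1 / C₁ := by positivity
      unfold eDens
      have h5 := mul_nonneg h4 (sq_nonneg (Dt v (t, x)))
      have h6 := mul_nonneg h4 (sq_nonneg (v (t, x)))
      linarith
    · obtain ⟨h1, h2⟩ := hzero (t, x) (not_le.mp hx)
      have h3 : ∀ α, Dx α v (t, x) = 0 := fun α => by simp [Dx, h2]
      have h4 : Dt v (t, x) = 0 := by simp [Dt, h2]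
      simp only [eDens, h1, h3, h4]
      simp
      positivity
  have hbd : ∀ᵐ x, eDens g v (φ x, x) + ∑ α, eFlux g v α (φ x, x) * fderiv ℝ φ x (Pi.single α 1)
      ≤ (C₂ + 1) * ((v (φ x, x)) ^ 2
        + ∑ α, (fderiv ℝ (fun y => v (φ y, y)) x (Pi.single α 1)) ^ 2) := by
    filter_upwards [hchar, hφ.ae_differentiableAt] with x hx hdx
    by_cases hxR : ‖x‖ ≤ R
    · have hch : ∀ α, fderiv ℝ (fun y => v (φ y, y)) x (Pi.single α 1)
          = Dx α v (φ x, x) + Dt v (φ x, x) * fderiv ℝ φ x (Pi.single α 1) := by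
        intro α
        have h1 : HasFDerivAt v (fderiv ℝ v (φ x, x)) (φ x, x) :=
          (hv.differentiable (by simp) _).hasFDerivAt
        have h2 := HasFDerivAt.comp (f := fun y => (φ y, y)) x h1 (hdx.hasFDerivAt.prodMk (hasFDerivAt_id x))
        rw [show fderiv ℝ (fun y => v (φ y, y)) x = _ from h2.fderiv]
        simp only [ContinuousLinearMap.comp_apply, ContinuousLinearMap.prod_apply,
          ContinuousLinearMap.id_apply, Dx, Dt]
        have : ((fderiv ℝ φ x (Pi.single α 1), Pi.single α 1) : ℝ × (Fin n → ℝ))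
            = (0, Pi.single α 1) + (fderiv ℝ φ x (Pi.single α 1)) • ((1, 0) : ℝ × (Fin n → ℝ)) := by
          ext <;> simp
        rw [this, map_add, map_smul, smul_eq_mul]
        ring
      simp only [hch]
      exact alg_flux hC₂.le (fun α β => g α β (φ x, x)) (fun α β => hgs α β _)
        (fun ξ => (hell _ (hφT x) x hxR ξ).2) (fun α => Dx α v (φ x, x))
        (fun α => fderiv ℝ φ x (Pi.single α 1)) (hx hxR) (v (φ x, x)) (Dt v (φ x, x))
    · obtain ⟨h1, h2⟩ := hzero (φ x, x) (not_le.mp hxR)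
      have h3 : eDens g v (φ x, x) = 0 := by simp [eDens, Dt, Dx, h1, h2]
      have h4 : ∀ α, eFlux g v α (φ x, x) = 0 := fun α => by simp [eFlux, Dt, h2]
      simp only [h3, h4, zero_mul, Finset.sum_const_zero, add_zero]
      have : 0 ≤ ∑ α, (fderiv ℝ (fun y => v (φ y, y)) x (Pi.single α 1)) ^ 2 :=
        Finset.sum_nonneg fun _ _ => sq_nonneg _
      positivity
  have hfin := full_estimate (q := fun p => f p ^ 2) (contDiff_eDens hg hv) (cs_eDens hvc) (contDiff_eFlux hg hv)
    (cs_eFlux hvc) (K := K0 * (1 + 1 / C₁)) (by positivity) hepos hD (hf.pow 2)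
    (fun p => sq_nonneg _) hfi hφ hφT hs (hwi.const_mul (C₂ + 1))
    (fun x => mul_nonneg (by positivity)
      (add_nonneg (sq_nonneg _) (Finset.sum_nonneg fun _ _ => sq_nonneg _)))
    (level_null hn hφ hφ0 s) hbd
  refine (show energy g v s = ∫ x, eDens g v (s, x) from rfl).trans_le (hfin.trans ?_)
  rw [integral_const_mul, mul_assoc (2 * Real.exp _) (C₂ + 1)]
  refine mul_le_mul_of_nonneg_left ?_ (by positivity)
  have : 0 ≤ ∫ p in Set.Icc (-T) T ×ˢ (Set.univ : Set (Fin n → ℝ)), (f p) ^ 2 :=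
    integral_nonneg fun p => sq_nonneg _
  nlinarith

theorem exists_cutoff {n : ℕ} {U C : Set (ℝ × (Fin n → ℝ))} (hU : IsOpen U) (hC : IsCompact C)
    (hCU : C ⊆ U) : ∃ χ : ℝ × (Fin n → ℝ) → ℝ, ContDiff ℝ 2 χ ∧ HasCompactSupport χ ∧
      (∀ p ∈ C, ∀ᶠ q in nhds p, χ q = 1) ∧ (∀ p ∉ U, ∀ᶠ q in nhds p, χ q = 0) := by
  obtain ⟨L, hL, hCL, hLU⟩ := exists_compact_between hC hU hCU
  obtain ⟨χ, h0, h1, -⟩ := exists_contMDiffMap_zero_one_nhds_of_isClosed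
    (modelWithCornersSelf ℝ (ℝ × (Fin n → ℝ))) (n := 2)
    (isOpen_interior (s := L)).isClosed_compl hC.isClosed
    (by rwa [← Set.subset_compl_iff_disjoint_left, compl_compl])
  rw [Filter.eventually_iff, mem_nhdsSet_iff_forall] at h0 h1
  refine ⟨χ, χ.contMDiff.contDiff, ?_, h1, fun p hp => h0 p fun h => hp (hLU (interior_subset h))⟩
  refine HasCompactSupport.intro hL fun p hp => ?_
  have h2 : ∀ᶠ q in nhds p, χ q = 0 := h0 p fun h => hp (interior_subset h)
  have h3 := h2.self_of_nhds
  exact h3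

theorem contDiff_cutoff {n : ℕ} {U : Set (ℝ × (Fin n → ℝ))} (hU : IsOpen U)
    {χ u : ℝ × (Fin n → ℝ) → ℝ} {k : WithTop ℕ∞} (hχ : ContDiff ℝ k χ)
    (h0 : ∀ p ∉ U, ∀ᶠ q in nhds p, χ q = 0) (hu : ContDiffOn ℝ k u U) :
    ContDiff ℝ k (fun p => χ p * u p) := by
  rw [contDiff_iff_contDiffAt]
  intro p
  by_cases hp : p ∈ U
  · exact hχ.contDiffAt.mul (hu.contDiffAt (hU.mem_nhds hp))
  · refine (contDiffAt_const (c := (0 : ℝ))).congr_of_eventuallyEq ?_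
    filter_upwards [h0 p hp] with q hq
    simp [hq]

theorem Dt_congr {n : ℕ} {u w : ℝ × (Fin n → ℝ) → ℝ} {p : ℝ × (Fin n → ℝ)}
    (h : u =ᶠ[nhds p] w) : Dt u =ᶠ[nhds p] Dt w := by
  filter_upwards [h.fderiv (𝕜 := ℝ)] with q hq
  simp [Dt, hq]

theorem Dx_congr {n : ℕ} {u w : ℝ × (Fin n → ℝ) → ℝ} {p : ℝ × (Fin n → ℝ)}
    (h : u =ᶠ[nhds p] w) (α : Fin n) : Dx α u =ᶠ[nhds p] Dx α w := by
  filter_upwards [h.fderiv (𝕜 := ℝ)] with q hq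
  simp [Dx, hq]

/-- Goursat-type estimate: for a fully characteristic Lipschitz graph
hypersurface, the energy of a solution at any time is controlled by the `H¹` norm of
its trace `w(x) = v(φ(x),x)` on the hypersurface and the source, with a constant
depending only on `n, T, C₁, C₂, M, Λ`. -/
theorem stmt_11 (n : ℕ) (hn : 1 ≤ n) (T C₁ C₂ M Λ : ℝ)
    (hT : 0 < T) (hC₁ : 0 < C₁) (hC₂ : 0 < C₂) (hM : 0 < M) (hΛ : 0 < Λ) :
    ∃ C : ℝ, 0 < C ∧
      ∀ (U : Set (ℝ × (Fin n → ℝ))), IsOpen U →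
        Set.Icc (-T) T ×ˢ (Set.univ : Set (Fin n → ℝ)) ⊆ U →
      ∀ g : Fin n → Fin n → ℝ × (Fin n → ℝ) → ℝ,
        (∀ α β, ContDiffOn ℝ 1 (g α β) U) →
        (∀ α β p, g α β p = g β α p) →
        (∀ p ∈ Set.Icc (-T) T ×ˢ (Set.univ : Set (Fin n → ℝ)), ∀ ξ : Fin n → ℝ,
          C₁ * (∑ α, (ξ α) ^ 2) ≤ (∑ α, ∑ β, g α β p * ξ α * ξ β) ∧
          (∑ α, ∑ β, g α β p * ξ α * ξ β) ≤ C₂ * (∑ α, (ξ α) ^ 2)) →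
        (∀ α β, ∀ p ∈ Set.Icc (-T) T ×ˢ (Set.univ : Set (Fin n → ℝ)),
          |Dt (g α β) p| ≤ M ∧ ∀ μ, |Dx μ (g α β) p| ≤ M) →
      ∀ (b0 : ℝ × (Fin n → ℝ) → ℝ) (b : Fin n → ℝ × (Fin n → ℝ) → ℝ)
        (c : ℝ × (Fin n → ℝ) → ℝ),
        Measurable b0 → (∀ α, Measurable (b α)) → Measurable c →
        (∀ p ∈ Set.Icc (-T) T ×ˢ (Set.univ : Set (Fin n → ℝ)),
          |b0 p| ≤ M ∧ (∀ α, |b α p| ≤ M) ∧ |c p| ≤ M) →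
      ∀ f : ℝ × (Fin n → ℝ) → ℝ, Continuous f →
        IntegrableOn (fun p => (f p) ^ 2)
          (Set.Icc (-T) T ×ˢ (Set.univ : Set (Fin n → ℝ))) →
      ∀ φ : (Fin n → ℝ) → ℝ, LipschitzWith (Real.toNNReal Λ) φ →
        (∀ x, -T < φ x ∧ φ x < T) →
        (∀ᵐ x : Fin n → ℝ,
          (∑ α, ∑ β, g α β (φ x, x) * fderiv ℝ φ x (Pi.single α 1)
            * fderiv ℝ φ x (Pi.single β 1)) = 1) →
      ∀ v : ℝ × (Fin n → ℝ) → ℝ, ContDiffOn ℝ 2 v U →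
        (∃ R : ℝ, 0 < R ∧ ∀ (t : ℝ) (x : Fin n → ℝ), R ≤ ‖x‖ → v (t, x) = 0) →
        (∀ p ∈ Set.Icc (-T) T ×ˢ (Set.univ : Set (Fin n → ℝ)),
          Dt (Dt v) p - (∑ α, ∑ β, g α β p * Dx α (Dx β v) p)
            + b0 p * Dt v p + (∑ α, b α p * Dx α v p) + c p * v p = f p) →
      ∀ s ∈ Set.Icc (-T) T,
        energy g v s
          ≤ C * ((∫ x : Fin n → ℝ,
                ((v (φ x, x)) ^ 2
                  + ∑ α, (fderiv ℝ (fun y => v (φ y, y)) x (Pi.single α 1)) ^ 2))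
              + ∫ p in Set.Icc (-T) T ×ˢ (Set.univ : Set (Fin n → ℝ)), (f p) ^ 2) := by
  refine ⟨2 * Real.exp (2 * ((3 + 5 * M + n * M + (2 * M + n * M) * n) * (1 + 1 / C₁))
        * T) * (C₂ + 1), by positivity, ?_⟩
  intro U hU hSU g hg hgs hell hgM b0 b c _ _ _ hb f hf hfi φ hφ hφT hchar v hv hvR hpde s hs
  obtain ⟨R, -, hvR⟩ := hvR
  obtain ⟨χ, hχ, hχc, hχ1, hχ0⟩ := exists_cutoff hU
    ((isCompact_Icc (a := -T) (b := T)).prod (isCompact_closedBall (0 : Fin n → ℝ) R))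
    ((Set.prod_mono_right (Set.subset_univ _)).trans hSU)
  have hev1 : ∀ t ∈ Set.Icc (-T) T, ∀ x : Fin n → ℝ, ‖x‖ ≤ R →
      ∀ u : ℝ × (Fin n → ℝ) → ℝ, (fun p => χ p * u p) =ᶠ[nhds (t, x)] u := by
    intro t ht x hx u
    filter_upwards [hχ1 (t, x) ⟨ht, by simpa using hx⟩] with q hq
    simp [hq]
  have hevv : ∀ t ∈ Set.Icc (-T) T, ∀ x : Fin n → ℝ,
      (fun p => χ p * v p) =ᶠ[nhds (t, x)] v := by
    intro t ht x
    by_cases hx : ‖x‖ ≤ R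
    · exact hev1 t ht x hx v
    · filter_upwards [fderiv_zero_of_vanish hvR (p := (t, x)) (not_le.mp hx)] with q hq
      simp [hq]
  have hmem : ∀ t ∈ Set.Icc (-T) T, ∀ x : Fin n → ℝ,
      (t, x) ∈ Set.Icc (-T) T ×ˢ (Set.univ : Set (Fin n → ℝ)) := fun t ht x => ⟨ht, trivial⟩
  have hφT' : ∀ x, φ x ∈ Set.Icc (-T) T := fun x => ⟨(hφT x).1.le, (hφT x).2.le⟩
  have hmain := core hn (T := T) (R := R) hC₁ hC₂ hM (g := fun α β p => χ p * g α β p)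
    (fun α β => contDiff_cutoff hU (hχ.of_le (by norm_num)) hχ0 (hg α β))
    (fun α β p => by simp only [hgs α β p])
    (fun t ht x hx ξ => by
      simp only [fun α β => (hev1 t ht x hx (g α β)).self_of_nhds]
      exact hell _ (hmem t ht x) ξ)
    (fun α β t ht x hx => by
      rw [(Dt_congr (hev1 t ht x hx (g α β))).self_of_nhds]
      simp only [fun μ => (Dx_congr (hev1 t ht x hx (g α β)) μ).self_of_nhds]
      exact hgM α β _ (hmem t ht x))
    (b0 := b0) (b := b) (c := c)
    (fun t ht x => hb _ (hmem t ht x)) hf hfi hφ hφT'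
    (by
      filter_upwards [hchar] with x hx h0
      simp [h0] at hx)
    (by
      filter_upwards [hchar] with x hx hxR
      simp only [fun α β => (hev1 _ (hφT' x) x hxR (g α β)).self_of_nhds]
      exact hx)
    (v := fun p => χ p * v p) (contDiff_cutoff hU hχ hχ0 hv) hχc.mul_right
    (fun t x hx => by simp [hvR t x hx])
    (fun t ht x hx => by
      have e := hevv t ht x
      rw [(Dt_congr (Dt_congr e)).self_of_nhds, (Dt_congr e).self_of_nhds]
      simp only [fun α β => (hev1 t ht x hx (g α β)).self_of_nhds,
        fun α β => (Dx_congr (Dx_congr e β) α).self_of_nhds,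
        fun α => (Dx_congr e α).self_of_nhds, e.self_of_nhds]
      exact hpde _ (hmem t ht x))
    hs
  have hen : energy (fun α β p => χ p * g α β p) (fun p => χ p * v p) s = energy g v s := by
    unfold energy
    congr 1
    funext x
    have e := hevv s hs x
    rw [(Dt_congr e).self_of_nhds]
    simp only [fun α => (Dx_congr e α).self_of_nhds, e.self_of_nhds]
    by_cases hx : ‖x‖ ≤ R
    · simp only [fun α β => (hev1 s hs x hx (g α β)).self_of_nhds]
    · have h2 : ∀ α, Dx α v (s, x) = 0 := fun α => by
        unfold Dx
        rw [(fderiv_zero_of_vanish hvR (p := (s, x)) (not_le.mp hx)).fderiv_eq]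
        simp
      simp [h2]
  have htr : ∀ x, χ (φ x, x) * v (φ x, x) = v (φ x, x) :=
    fun x => (hevv _ (hφT' x) x).self_of_nhds
  simp only [htr] at hmain
  rw [hen] at hmain
  exact hmain
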